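/- There exists an absolute constant C such that for every prime p and every even integer α ≥ 2, one has | ∑_{u+v = 3α, u,v ≥ 0} s(p^u, p^v) − p^{3α/2} | ≤ C p^{3α/2 − 1}; that is, the sum of s(m₁,m₂) over all factorizations p^{3α} = m₁m₂ equals p^{3α/2} + O(p^{3α/2 − 1}) uniformly in p and even α. -/

import Mathlib

/-- `numSubgroups m₁ m₂` is the number of subgroups of the additive group
`ℤ_{m₁} × ℤ_{m₂}`. -/
noncomputable def numSubgroups (m₁ m₂ : ℕ) : ℕ :=
  Nat.card (AddSubgroup (ZMod m₁ × ZMod m₂))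

/-!
By Goursat's lemma a subgroup of `A × B` is a subgroup `I` of `A`, a subgroup `J` of `B` and a
homomorphism `I → B / J`. When `A` and `B` are finite cyclic, `I` and `J` are determined by the
divisors `d = |I|` and `e = |B / J|`, and there are `gcd(d, e)` homomorphisms, so
`s(m₁, m₂) = ∑_{d ∣ m₁} ∑_{e ∣ m₂} gcd(d, e)`. For prime powers the summand is `p ^ min(i, j)`, and
counting the `(u, i, j)` with `i ≤ u`, `j ≤ 2n - u` and a given minimum yields the exact value
`∑_{u + v = 2n} s(p ^ u, p ^ v) = ∑_{k ≤ n} (2k + 1)² p ^ (n - k)`.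
The term `k = 0` is the main term; the others are dominated by `p ^ (n - 1)` times a series that
converges uniformly in `p ≥ 2`.
-/

open Finset

section Goursat

variable {A B : Type*} [AddGroup A] [AddCommGroup B] {I : AddSubgroup A} {J : AddSubgroup B}

/-- The subgroup of `A × B` with Goursat data `(I, J, φ)`: its projection to `A` is `I`, and its
fibre over `a ∈ I` is the coset `φ a` of `J`. -/
def goursatSubgroup (φ : I →+ B ⧸ J) : AddSubgroup (A × B) :=
  (φ.graph.comap ((AddMonoidHom.id I).prodMap (QuotientAddGroup.mk' J))).map
    (I.subtype.prodMap (AddMonoidHom.id B))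

theorem mem_goursatSubgroup {φ : I →+ B ⧸ J} {a : A} {b : B} :
    (a, b) ∈ goursatSubgroup φ ↔ ∃ ha : a ∈ I, φ ⟨a, ha⟩ = b := by
  simp [goursatSubgroup, AddMonoidHom.mem_graph]

theorem map_fst_goursatSubgroup (φ : I →+ B ⧸ J) :
    (goursatSubgroup φ).map (AddMonoidHom.fst A B) = I := by
  ext a
  constructor
  · rintro ⟨⟨a, b⟩, h, rfl⟩
    exact (mem_goursatSubgroup.1 h).1
  · intro ha
    obtain ⟨b, hb⟩ := QuotientAddGroup.mk_surjective (φ ⟨a, ha⟩)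
    exact ⟨(a, b), mem_goursatSubgroup.2 ⟨ha, hb.symm⟩, rfl⟩

theorem comap_inr_goursatSubgroup (φ : I →+ B ⧸ J) :
    (goursatSubgroup φ).comap (AddMonoidHom.inr A B) = J := by
  ext b
  have h_zero (h : (0 : A) ∈ I) : φ ⟨0, h⟩ = 0 := map_zero φ
  simp [mem_goursatSubgroup, h_zero, eq_comm (a := (0 : B ⧸ J))]

theorem goursatSubgroup_injective :
    Function.Injective (goursatSubgroup : (I →+ B ⧸ J) → AddSubgroup (A × B)) := by
  intro φ ψ h
  ext ⟨a, ha⟩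
  obtain ⟨b, hb⟩ := QuotientAddGroup.mk_surjective (φ ⟨a, ha⟩)
  have hab : (a, b) ∈ goursatSubgroup ψ := h ▸ mem_goursatSubgroup.2 ⟨ha, hb.symm⟩
  rw [← hb, (mem_goursatSubgroup.1 hab).2]

theorem exists_goursatSubgroup_eq (H : AddSubgroup (A × B)) :
    ∃ φ : H.map (AddMonoidHom.fst A B) →+ B ⧸ H.comap (AddMonoidHom.inr A B),
      goursatSubgroup φ = H := by
  let proj := (AddMonoidHom.fst A B).addSubgroupMap H
  let coset := ((QuotientAddGroup.mk' (H.comap (AddMonoidHom.inr A B))).comp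
    (AddMonoidHom.snd A B)).comp H.subtype
  have hproj : Function.Surjective proj := (AddMonoidHom.fst A B).addSubgroupMap_surjective H
  have hker : proj.ker ≤ coset.ker := by
    rintro ⟨⟨a, b⟩, hab⟩ h
    obtain rfl : a = 0 := congrArg Subtype.val h
    exact (QuotientAddGroup.eq_zero_iff b).2 hab
  let φ := proj.liftOfSurjective hproj ⟨coset, hker⟩
  have hφ {a : A} {b : B} (hab : (a, b) ∈ H) : φ ⟨a, (a, b), hab, rfl⟩ = b :=
    proj.liftOfRightInverse_comp_apply _ _ ⟨coset, hker⟩ ⟨(a, b), hab⟩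
  refine ⟨φ, ?_⟩
  ext ⟨a, b⟩
  rw [mem_goursatSubgroup]
  refine ⟨?_, fun hab => ⟨_, hφ hab⟩⟩
  rintro ⟨⟨⟨a, b'⟩, hab', rfl⟩, hb⟩
  have hdiff : (0, -b' + b) ∈ H := QuotientAddGroup.eq.1 ((hφ hab').symm.trans hb)
  simpa using H.add_mem hab' hdiff

variable (A B) in
/-- Goursat's lemma as a bijection between the triples `(I, J, φ)` and the subgroups of `A × B`. -/
noncomputable def goursatEquiv :
    (Σ (I : AddSubgroup A) (J : AddSubgroup B), I →+ B ⧸ J) ≃ AddSubgroup (A × B) :=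
  Equiv.ofBijective (fun t => goursatSubgroup t.2.2) <| by
    constructor
    · rintro ⟨I, J, φ⟩ ⟨I', J', φ'⟩ (h : goursatSubgroup φ = goursatSubgroup φ')
      obtain rfl : I = I' := by rw [← map_fst_goursatSubgroup φ, h, map_fst_goursatSubgroup]
      obtain rfl : J = J' := by rw [← comap_inr_goursatSubgroup φ, h, comap_inr_goursatSubgroup]
      rw [goursatSubgroup_injective h]
    · intro H
      obtain ⟨φ, hφ⟩ := exists_goursatSubgroup_eq H
      exact ⟨⟨_, _, φ⟩, hφ⟩

end Goursat

section Cyclic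

theorem card_addMonoidHom_of_isAddCyclic (G H : Type*) [AddGroup G] [IsAddCyclic G]
    [AddCommGroup H] :
    Nat.card (G →+ H) = Nat.card (nsmulAddMonoidHom (α := H) (Nat.card G)).ker := by
  let e : (G →+ H) ≃ (ZMod (Nat.card G) →+ H) :=
    (zmodAddCyclicAddEquiv ‹IsAddCyclic G›).symm.addMonoidHomCongrLeftEquiv
  refine Nat.card_congr (e.trans <| (ZMod.lift _).symm.trans <|
    (zmultiplesHom H).symm.subtypeEquiv fun f => ?_)
  simp [AddMonoidHom.mem_ker, ← map_nsmul]

variable {G M : Type*} [AddCommGroup G] [IsAddCyclic G] [Finite G] [AddCommMonoid M]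

theorem ker_nsmulAddMonoidHom_card_of_isAddCyclic (I : AddSubgroup G) :
    (nsmulAddMonoidHom (α := G) (Nat.card I)).ker = I := by
  symm
  refine AddSubgroup.eq_of_le_of_card_ge (fun x hx => ?_) ?_
  · exact congrArg Subtype.val (card_nsmul_eq_zero' (x := (⟨x, hx⟩ : I)))
  · rw [IsAddCyclic.card_nsmulAddMonoidHom_ker,
      Nat.gcd_eq_right (AddSubgroup.card_addSubgroup_dvd_card I)]

theorem sum_card_addSubgroup_of_isAddCyclic [Fintype (AddSubgroup G)] (f : ℕ → M) :
    ∑ I : AddSubgroup G, f (Nat.card I) = ∑ d ∈ (Nat.card G).divisors, f d := by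
  refine sum_bij' (fun I _ => Nat.card I) (fun d _ => (nsmulAddMonoidHom (α := G) d).ker)
    (fun I _ => ?_) (fun _ _ => mem_univ _)
    (fun I _ => ker_nsmulAddMonoidHom_card_of_isAddCyclic I) (fun d hd => ?_) (fun _ _ => rfl)
  · exact Nat.mem_divisors.2 ⟨AddSubgroup.card_addSubgroup_dvd_card I, Nat.card_pos.ne'⟩
  · rw [IsAddCyclic.card_nsmulAddMonoidHom_ker, Nat.gcd_eq_right (Nat.dvd_of_mem_divisors hd)]

theorem sum_card_quotient_of_isAddCyclic [Fintype (AddSubgroup G)] (f : ℕ → M) :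
    ∑ J : AddSubgroup G, f (Nat.card (G ⧸ J)) = ∑ d ∈ (Nat.card G).divisors, f d := by
  have hcard (J : AddSubgroup G) : Nat.card (G ⧸ J) = Nat.card G / Nat.card J := by
    rw [← J.index_eq_card, ← J.card_mul_index, Nat.mul_div_cancel_left _ Nat.card_pos]
  simp only [hcard]
  rw [sum_card_addSubgroup_of_isAddCyclic (f := fun d => f (Nat.card G / d)),
    Nat.sum_div_divisors]

theorem card_addSubgroup_prod_of_isAddCyclic (A B : Type*) [AddCommGroup A] [IsAddCyclic A]
    [Finite A] [AddCommGroup B] [IsAddCyclic B] [Finite B] :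
    Nat.card (AddSubgroup (A × B)) =
      ∑ d ∈ (Nat.card A).divisors, ∑ e ∈ (Nat.card B).divisors, d.gcd e := by
  have := Fintype.ofFinite (AddSubgroup A)
  have := Fintype.ofFinite (AddSubgroup B)
  have hfinite (I : AddSubgroup A) (J : AddSubgroup B) : Finite (I →+ B ⧸ J) :=
    DFunLike.finite _
  have hhom (I : AddSubgroup A) (J : AddSubgroup B) :
      Nat.card (I →+ B ⧸ J) = (Nat.card I).gcd (Nat.card (B ⧸ J)) := by
    have : IsAddCyclic (B ⧸ J) := isAddCyclic_of_surjective _ (QuotientAddGroup.mk'_surjective J)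
    rw [card_addMonoidHom_of_isAddCyclic, IsAddCyclic.card_nsmulAddMonoidHom_ker, Nat.gcd_comm]
  rw [← Nat.card_congr (goursatEquiv A B), Nat.card_sigma]
  simp only [Nat.card_sigma, hhom]
  rw [sum_card_addSubgroup_of_isAddCyclic (f := fun d => ∑ J, d.gcd (Nat.card (B ⧸ J)))]
  exact sum_congr rfl fun d _ => sum_card_quotient_of_isAddCyclic (f := d.gcd)

end Cyclic

theorem numSubgroups_eq_sum_gcd (m n : ℕ) [NeZero m] [NeZero n] :
    numSubgroups m n = ∑ d ∈ m.divisors, ∑ e ∈ n.divisors, d.gcd e := by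
  rw [numSubgroups, card_addSubgroup_prod_of_isAddCyclic, Nat.card_zmod, Nat.card_zmod]

theorem gcd_pow_pow_eq_pow_min (a i j : ℕ) : (a ^ i).gcd (a ^ j) = a ^ min i j := by
  rcases le_total i j with h | h
  · rw [min_eq_left h, Nat.gcd_eq_left (pow_dvd_pow a h)]
  · rw [min_eq_right h, Nat.gcd_eq_right (pow_dvd_pow a h)]

theorem sum_range_sum_range_min {M : Type*} [AddCommMonoid M] (f : ℕ → M) (a b : ℕ) :
    ∑ i ∈ range a, ∑ j ∈ range b, f (min i j) =
      ∑ m ∈ range (min a b), (a + b - 1 - 2 * m) • f m := by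
  induction a generalizing b f with
  | zero => simp
  | succ a ih =>
    cases b with
    | zero => simp
    | succ b =>
      have hcoeff (m : ℕ) : a + 1 + (b + 1) - 1 - 2 * (m + 1) = a + b - 1 - 2 * m := by omega
      have hzero : a + 1 + (b + 1) - 1 - 2 * 0 = a + b + 1 := by omega
      simp only [sum_range_succ', Nat.add_min_add_right, hcoeff, hzero, sum_add_distrib,
        Nat.zero_min, Nat.min_zero, ih (fun m => f (m + 1)), sum_const, card_range, add_nsmul,
        one_nsmul]
      abel

theorem sum_range_sum_range_min_sub {M : Type*} [AddCommMonoid M] (f : ℕ → M) (n : ℕ) :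
    ∑ u ∈ range (2 * n + 1), ∑ m ∈ range (min u (2 * n - u) + 1), f m =
      ∑ m ∈ range (n + 1), (2 * (n - m) + 1) • f m := by
  have hswap (u m : ℕ) :
      u ∈ range (2 * n + 1) ∧ m ∈ range (min u (2 * n - u) + 1) ↔
        u ∈ Icc m (2 * n - m) ∧ m ∈ range (n + 1) := by
    simp only [mem_range, mem_Icc]
    omega
  rw [sum_comm' hswap]
  refine sum_congr rfl fun m hm => ?_
  rw [sum_const, Nat.card_Icc]
  congr 1
  have := mem_range.1 hm
  omega

theorem numSubgroups_prime_pow {p : ℕ} (hp : p.Prime) (u v : ℕ) :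
    numSubgroups (p ^ u) (p ^ v) =
      ∑ m ∈ range (min u v + 1), (u + v + 1 - 2 * m) * p ^ m := by
  have : NeZero p := ⟨hp.ne_zero⟩
  rw [numSubgroups_eq_sum_gcd]
  simp only [Nat.sum_divisors_prime_pow hp, gcd_pow_pow_eq_pow_min,
    sum_range_sum_range_min (p ^ ·), smul_eq_mul, Nat.add_min_add_right]
  refine sum_congr rfl fun m _ => ?_
  congr 1
  omega

theorem sum_numSubgroups_prime_pow {p : ℕ} (hp : p.Prime) (n : ℕ) :
    ∑ u ∈ range (2 * n + 1), numSubgroups (p ^ u) (p ^ (2 * n - u)) =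
      ∑ k ∈ range (n + 1), (2 * k + 1) ^ 2 * p ^ (n - k) := by
  calc
    _ = ∑ u ∈ range (2 * n + 1), ∑ m ∈ range (min u (2 * n - u) + 1),
          (2 * (n - m) + 1) * p ^ m := by
      refine sum_congr rfl fun u hu => ?_
      rw [numSubgroups_prime_pow hp]
      refine sum_congr rfl fun m hm => ?_
      congr 1
      have := mem_range.1 hu
      have := mem_range.1 hm
      omega
    _ = ∑ m ∈ range (n + 1), (2 * (n - m) + 1) ^ 2 * p ^ m := by
      simp only [sum_range_sum_range_min_sub (fun m => (2 * (n - m) + 1) * p ^ m), smul_eq_mul,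
        ← mul_assoc, sq]
    _ = _ := by
      rw [← sum_flip]
      refine sum_congr rfl fun k hk => ?_
      rw [Nat.sub_sub_self (mem_range_succ_iff.1 hk)]

theorem sum_mul_pow_sub_le_tsum_mul_pow {c : ℕ → ℝ} {r x : ℝ} (hc : ∀ k, 0 ≤ c k) (hr : 0 < r)
    (hrx : r ≤ x) (hsum : Summable fun k => c k / r ^ k) (n : ℕ) :
    ∑ k ∈ range (n + 1), c k * x ^ (n - k) ≤ (∑' k, c k / r ^ k) * x ^ n := by
  have hx : 0 < x := hr.trans_le hrx
  have hterm {k : ℕ} (hk : k ∈ range (n + 1)) : c k * x ^ (n - k) ≤ c k / r ^ k * x ^ n := by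
    rw [pow_sub₀ x hx.ne' (mem_range_succ_iff.1 hk), mul_comm (x ^ n), ← mul_assoc,
      ← div_eq_mul_inv]
    gcongr
    exact hc k
  calc
    _ ≤ ∑ k ∈ range (n + 1), c k / r ^ k * x ^ n := sum_le_sum fun k => hterm
    _ = (∑ k ∈ range (n + 1), c k / r ^ k) * x ^ n := (sum_mul ..).symm
    _ ≤ (∑' k, c k / r ^ k) * x ^ n := by
      gcongr
      exact hsum.sum_le_tsum _ fun k _ => div_nonneg (hc k) (by positivity)

theorem stmt13_general : ∃ C : ℝ, ∀ p : ℕ, p.Prime → ∀ n : ℕ,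
    |(∑ u ∈ range (2 * (n + 1) + 1),
        (numSubgroups (p ^ u) (p ^ (2 * (n + 1) - u)) : ℝ)) - (p : ℝ) ^ (n + 1)|
      ≤ C * (p : ℝ) ^ n := by
  let c (k : ℕ) : ℝ := (2 * (k + 1 : ℕ) + 1) ^ 2
  have hsum : Summable fun k => c k / 2 ^ k := by
    have hpow (d : ℕ) : Summable fun k : ℕ => (k : ℝ) ^ d * 2⁻¹ ^ k :=
      summable_pow_mul_geometric_of_norm_lt_one d (by norm_num)
    refine (((hpow 2).mul_left 4).add <| ((hpow 1).mul_left 12).add <|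
      (hpow 0).mul_left 9).congr fun k => ?_
    simp only [c, div_eq_mul_inv, inv_pow]
    push_cast
    ring
  refine ⟨∑' k, c k / 2 ^ k, fun p hp n => ?_⟩
  have hexact : ∑ u ∈ range (2 * (n + 1) + 1),
      (numSubgroups (p ^ u) (p ^ (2 * (n + 1) - u)) : ℝ) - (p : ℝ) ^ (n + 1) =
        ∑ k ∈ range (n + 1), c k * (p : ℝ) ^ (n - k) := by
    rw [← Nat.cast_sum, sum_numSubgroups_prime_pow hp, sum_range_succ']
    simp [c, Nat.add_sub_add_right]
  rw [hexact, abs_of_nonneg (by positivity)]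
  exact sum_mul_pow_sub_le_tsum_mul_pow (fun k => sq_nonneg _) two_pos
    (by exact_mod_cast hp.two_le) hsum n

theorem stmt13 : ∃ C : ℝ, ∀ p : ℕ, p.Prime → ∀ α : ℕ, 2 ≤ α → Even α →
    |(∑ u ∈ Finset.range (3 * α + 1),
        (numSubgroups (p ^ u) (p ^ (3 * α - u)) : ℝ)) - (p : ℝ) ^ (3 * α / 2)|
      ≤ C * (p : ℝ) ^ (3 * α / 2 - 1) := by
  obtain ⟨C, hC⟩ := stmt13_general
  refine ⟨C, fun p hp α hα heven => ?_⟩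
  obtain ⟨n, hn⟩ : ∃ n, 3 * α = 2 * (n + 1) := ⟨3 * α / 2 - 1, by grind⟩
  simpa [hn] using hC p hp n
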